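/- Every finite insoluble group has order divisible by at least three distinct primes. -/

import Mathlib

lemma multiset_norm_sum_le_card (s : Multiset ℂ) (h : ∀ z ∈ s, ‖z‖ = 1) :
    ‖s.sum‖ ≤ Multiset.card s := by
  induction s using Multiset.induction_on with
  | empty => simp
  | cons a t ih =>
    have h1 := ih (fun z hz => h z (Multiset.mem_cons_of_mem hz))
    have h2 := h a (Multiset.mem_cons_self a t)
    have h3 := norm_add_le a t.sum
    simp only [Multiset.sum_cons, Multiset.card_cons, Nat.cast_add, Nat.cast_one]
    linarith

lemma multiset_eq_of_norm_sum (s : Multiset ℂ) (h : ∀ z ∈ s, ‖z‖ = 1)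
    (hs : ‖s.sum‖ = Multiset.card s) (z w : ℂ) (hz : z ∈ s) (hw : w ∈ s) : z = w := by
  by_contra hne
  obtain ⟨t, rfl⟩ := Multiset.exists_cons_of_mem hz
  have hw' : w ∈ t := by
    rcases Multiset.mem_cons.1 hw with h | h
    · exact absurd h.symm hne
    · exact h
  obtain ⟨t, rfl⟩ := Multiset.exists_cons_of_mem hw'
  have h1 := h z hz
  have h2 := h w hw
  have h3 := multiset_norm_sum_le_card t (fun x hx => h x (by simp [hx]))
  have h4 : ‖z + w‖ = ‖z‖ + ‖w‖ := by
    apply le_antisymm (norm_add_le z w)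
    simp only [Multiset.sum_cons, Multiset.card_cons, Nat.cast_add, Nat.cast_one] at hs
    have := norm_add_le (z + w) t.sum
    rw [add_assoc, hs] at this
    linarith
  have h5 := sameRay_iff_norm_add.2 h4
  exact hne ((sameRay_iff_of_norm_eq (h1.trans h2.symm)).1 h5)

lemma avg_roots_of_unity_aux (K : Type) [Field K] [NumberField K] (n : ℕ) [NeZero n]
    [IsCyclotomicExtension {n} ℚ K] (hn : 0 < n) (s : Multiset ℂ) (h : ∀ z ∈ s, z ^ n = 1)
    (hi : IsIntegral ℤ (s.sum / Multiset.card s)) :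
    s.sum = 0 ∨ ∀ z ∈ s, ∀ w ∈ s, z = w := by
  classical
  by_cases h0 : s.sum = 0
  · exact Or.inl h0
  right
  have hs0 : s ≠ 0 := by rintro rfl; simp at h0
  have hc : (Multiset.card s : ℂ) ≠ 0 := by
    simpa using hs0
  have hcR : (0 : ℝ) < (Multiset.card s : ℝ) := by
    exact_mod_cast Multiset.card_pos.2 hs0
  have hnorm : ∀ z : ℂ, z ^ n = 1 → ‖z‖ = 1 := fun z hz =>
    Complex.norm_eq_one_of_pow_eq_one hz hn.ne'
  let φ : K →+* ℂ := (IsAlgClosed.lift (R := ℚ) (S := K) (M := ℂ)).toRingHom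
  have hζ : IsPrimitiveRoot (IsCyclotomicExtension.zeta n ℚ K) n :=
    IsCyclotomicExtension.zeta_spec n ℚ K
  have hζ' := hζ.map_of_injective φ.injective
  have hex : ∀ z : ℂ, ∃ x : K, z ^ n = 1 → φ x = z ∧ x ^ n = 1 := by
    intro z
    by_cases hz : z ^ n = 1
    · obtain ⟨i, -, hi⟩ := hζ'.eq_pow_of_pow_eq_one hz
      refine ⟨(IsCyclotomicExtension.zeta n ℚ K) ^ i, fun _ => ⟨by rw [map_pow, hi], ?_⟩⟩
      rw [← pow_mul, mul_comm, pow_mul, hζ.pow_eq_one, one_pow]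
    · exact ⟨0, fun h => absurd h hz⟩
  choose g hg using hex
  let t : Multiset K := s.map g
  have ht : t.map φ = s := by
    simp only [t, Multiset.map_map]
    conv_rhs => rw [← Multiset.map_id s]
    exact Multiset.map_congr rfl (fun z hz => (hg z (h z hz)).1)
  let a : K := t.sum / Multiset.card s
  have hφa : ∀ ψ : K →+* ℂ, ψ a = (t.map ψ).sum / Multiset.card s := by
    intro ψ
    simp only [a, map_div₀, map_natCast]
    rw [map_multiset_sum]
  have ha0 : a ≠ 0 := by
    intro h
    have := hφa φ
    rw [h, ht, map_zero] at this
    exact (div_ne_zero h0 hc) this.symm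
  have hai : IsIntegral ℤ a := by
    have h1 : IsIntegral ℤ (φ a) := by rw [hφa φ, ht]; exact hi
    exact (isIntegral_algHom_iff φ.toIntAlgHom φ.injective).1 h1
  obtain ⟨m, hm, ham⟩ := NumberField.Embeddings.pow_eq_one_of_norm_le_one K ℂ ha0 hai (by
    intro ψ
    rw [hφa, norm_div, Complex.norm_natCast, div_le_one hcR]
    have := multiset_norm_sum_le_card (t.map ψ) (by
      intro z hz
      obtain ⟨x, hx, rfl⟩ := Multiset.mem_map.1 hz
      obtain ⟨y, hy, rfl⟩ := Multiset.mem_map.1 hx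
      apply hnorm
      rw [← map_pow, (hg y (h y hy)).2, map_one])
    simpa [t] using this)
  have h1 : ‖φ a‖ = 1 := by
    apply Complex.norm_eq_one_of_pow_eq_one (n := m) _ hm.ne'
    rw [← map_pow, ham, map_one]
  rw [hφa, ht, norm_div, Complex.norm_natCast, div_eq_one_iff_eq hcR.ne'] at h1
  exact fun z hz w hw => multiset_eq_of_norm_sum s (fun z hz => hnorm z (h z hz)) h1 z w hz hw

lemma avg_roots_of_unity (n : ℕ) (hn : 0 < n) (s : Multiset ℂ) (h : ∀ z ∈ s, z ^ n = 1)
    (hi : IsIntegral ℤ (s.sum / Multiset.card s)) :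
    s.sum = 0 ∨ ∀ z ∈ s, ∀ w ∈ s, z = w := by
  have : NeZero n := ⟨hn.ne'⟩
  have : IsCyclotomicExtension {n} ℚ (CyclotomicField n ℚ) :=
    CyclotomicField.isCyclotomicExtension n ℚ
  exact avg_roots_of_unity_aux (CyclotomicField n ℚ) n hn s h hi

open Polynomial in
lemma matrix_roots (n d : ℕ) (M : Matrix (Fin d) (Fin d) ℂ) (hM : M ^ n = 1) :
    ∀ z ∈ M.charpoly.roots, z ^ n = 1 := by
  intro z hz
  have hr := (Polynomial.mem_roots'.1 hz).2
  have h1 : Module.End.HasEigenvalue (Matrix.toLin' M) z := by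
    rw [Module.End.hasEigenvalue_iff_isRoot_charpoly, Matrix.charpoly_toLin']
    exact hr
  obtain ⟨v, hv⟩ := h1.exists_hasEigenvector
  have h2 := hv.pow_apply n
  rw [← Matrix.toLin'_pow, hM, Matrix.toLin'_one] at h2
  have h3 : (z ^ n - 1) • v = 0 := by
    rw [sub_smul, one_smul, ← h2]; simp
  rcases smul_eq_zero.1 h3 with h | h
  · exact sub_eq_zero.1 h
  · exact absurd h hv.2

open Polynomial in
lemma matrix_scalar_or_trace (n d : ℕ) (hn : 0 < n) (M : Matrix (Fin d) (Fin d) ℂ)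
    (hM : M ^ n = 1) (hi : IsIntegral ℤ (M.trace / d)) :
    M.trace = 0 ∨ ∃ c : ℂ, M = algebraMap ℂ _ c := by
  have hcard : Multiset.card M.charpoly.roots = d := by
    rw [← (IsAlgClosed.splits M.charpoly).natDegree_eq_card_roots, Matrix.charpoly_natDegree_eq_dim]
    simp
  have hr := matrix_roots n d M hM
  rw [Matrix.trace_eq_sum_roots_charpoly] at hi ⊢
  rcases avg_roots_of_unity n hn M.charpoly.roots hr (by rw [hcard]; exact hi) with h | h
  · exact Or.inl h
  right
  rcases Nat.eq_zero_or_pos d with rfl | hd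
  · exact ⟨0, Subsingleton.elim _ _⟩
  obtain ⟨c, hc⟩ := Multiset.card_pos_iff_exists_mem.1 (by rw [hcard]; exact hd)
  refine ⟨c, ?_⟩
  have hrep : M.charpoly.roots = Multiset.replicate d c :=
    Multiset.eq_replicate.2 ⟨hcard, fun b hb => h b hb c hc⟩
  have hcp : M.charpoly = (X - C c) ^ d := by
    rw [(IsAlgClosed.splits M.charpoly).eq_prod_roots_of_monic M.charpoly_monic, hrep]
    simp
  have h1 : minpoly ℂ M ∣ (X - C c) ^ d := by
    rw [← hcp]; exact Matrix.minpoly_dvd_charpoly M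
  have h2 : minpoly ℂ M ∣ (X ^ n - 1 : ℂ[X]) := by
    apply minpoly.dvd; simp [hM]
  have hsq : Squarefree (minpoly ℂ M) := by
    apply Squarefree.squarefree_of_dvd h2
    apply Polynomial.Separable.squarefree
    exact (X_pow_sub_one_separable_iff.2 (by exact_mod_cast hn.ne'))
  have h3 : minpoly ℂ M ∣ X - C c := by
    exact (hsq.dvd_pow_iff_dvd hd.ne').1 h1
  have h4 := aeval_eq_zero_of_dvd_aeval_eq_zero h3 (minpoly.aeval ℂ M)
  simpa [sub_eq_zero] using h4

lemma matrix_trace_integral (n d : ℕ) (hn : 0 < n) (M : Matrix (Fin d) (Fin d) ℂ)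
    (hM : M ^ n = 1) : IsIntegral ℤ M.trace := by
  rw [Matrix.trace_eq_sum_roots_charpoly]
  apply IsIntegral.multiset_sum
  intro z hz
  apply IsIntegral.of_pow hn
  rw [matrix_roots n d M hM z hz]
  exact isIntegral_one


lemma trace_mulLeft_group {G : Type*} [Group G] [Fintype G] [DecidableEq G] (g : G) :
    LinearMap.trace ℂ (MonoidAlgebra ℂ G) (LinearMap.mulLeft ℂ (MonoidAlgebra.of ℂ G g)) =
      if g = 1 then (Fintype.card G : ℂ) else 0 := by
  let b : Module.Basis G ℂ (MonoidAlgebra ℂ G) := MonoidAlgebra.basis G ℂ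
  rw [LinearMap.trace_eq_matrix_trace ℂ b, Matrix.trace]
  have : ∀ h, (LinearMap.toMatrix b b (LinearMap.mulLeft ℂ (MonoidAlgebra.of ℂ G g))).diag h
      = if g = 1 then 1 else 0 := by
    intro h
    rw [Matrix.diag_apply, LinearMap.toMatrix_apply]
    have h1 : (LinearMap.mulLeft ℂ (MonoidAlgebra.of ℂ G g)) (b h) = b (g * h) := by
      simp [b, MonoidAlgebra.single_mul_single]
    rw [h1, Module.Basis.repr_self, Finsupp.single_apply]
    simp
  rw [Finset.sum_congr rfl (fun h _ => this h)]
  simp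

lemma trace_mulLeft_pi {n : ℕ} (d : Fin n → ℕ) (x : Π i, Matrix (Fin (d i)) (Fin (d i)) ℂ) :
    LinearMap.trace ℂ (Π i, Matrix (Fin (d i)) (Fin (d i)) ℂ) (LinearMap.mulLeft ℂ x) =
      ∑ i, (d i : ℂ) * (x i).trace := by
  let b := Pi.basis (fun i => Matrix.stdBasis ℂ (Fin (d i)) (Fin (d i)))
  rw [LinearMap.trace_eq_matrix_trace ℂ b, Matrix.trace, Fintype.sum_sigma]
  apply Finset.sum_congr rfl
  intro i _
  rw [Fintype.sum_prod_type, Matrix.trace, Finset.mul_sum]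
  apply Finset.sum_congr rfl
  intro j _
  have : ∀ k, (LinearMap.toMatrix b b (LinearMap.mulLeft ℂ x)).diag ⟨i, (j, k)⟩ = x i j j := by
    intro k
    simp only [Matrix.diag_apply, LinearMap.toMatrix_apply, b, Pi.basis_repr, Pi.basis_apply,
      LinearMap.mulLeft_apply, Pi.mul_apply, Pi.single_eq_same, Matrix.stdBasis_eq_single]
    simp [Matrix.stdBasis, Matrix.mul_apply, Matrix.single]
  rw [Finset.sum_congr rfl (fun k _ => this k)]
  simp

section
variable {G : Type*} [Group G] [Fintype G] {d : ℕ}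
  (φ : MonoidAlgebra ℂ G →ₐ[ℂ] Matrix (Fin d) (Fin d) ℂ)

lemma central_scalar (hφ : Function.Surjective φ) (z : MonoidAlgebra ℂ G)
    (hz : ∀ h, MonoidAlgebra.of ℂ G h * z = z * MonoidAlgebra.of ℂ G h) :
    ∃ c : ℂ, φ z = algebraMap ℂ _ c := by
  have h1 : ∀ y : MonoidAlgebra ℂ G, y * z = z * y := by
    intro y
    induction y using MonoidAlgebra.induction_on with
    | of g => exact hz g
    | add a b ha hb => rw [add_mul, mul_add, ha, hb]
    | smul r a ha => rw [smul_mul_assoc, mul_smul_comm, ha]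
  have h2 : φ z ∈ Set.center (Matrix (Fin d) (Fin d) ℂ) := by
    rw [Semigroup.mem_center_iff]
    intro m
    obtain ⟨y, rfl⟩ := hφ m
    rw [← map_mul, ← map_mul, h1]
  rw [Matrix.center_eq_scalar_image] at h2
  obtain ⟨c, -, hc⟩ := h2
  exact ⟨c, by rw [← hc]; rfl⟩

lemma trace_algebraMap_matrix (c : ℂ) :
    (algebraMap ℂ (Matrix (Fin d) (Fin d) ℂ) c).trace = d * c := by
  rw [Algebra.algebraMap_eq_smul_one, Matrix.trace_smul, Matrix.trace_one]
  simp [mul_comm]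

lemma trace_conj_eq (g x : G) (h : IsConj g x) :
    (φ (MonoidAlgebra.of ℂ G x)).trace = (φ (MonoidAlgebra.of ℂ G g)).trace := by
  obtain ⟨c, rfl⟩ := isConj_iff.1 h
  rw [map_mul, map_mul, Matrix.trace_mul_comm, ← map_mul, ← map_mul, ← mul_assoc]
  simp

open Classical in
lemma class_sum_integral (hφ : Function.Surjective φ) (hd : 0 < d) (g : G) :
    ∃ c : ℂ, IsIntegral ℤ c ∧ d * c = (Finset.univ.filter (fun x => IsConj g x)).card *
      (φ (MonoidAlgebra.of ℂ G g)).trace := by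
  set cl := Finset.univ.filter (fun x => IsConj g x) with hcl
  let z : MonoidAlgebra ℂ G := ∑ x ∈ cl, MonoidAlgebra.of ℂ G x
  obtain ⟨c, hc⟩ := central_scalar φ hφ z (by
    intro h
    simp only [z, Finset.mul_sum, Finset.sum_mul, ← map_mul]
    refine Finset.sum_bij (fun x _ => h * x * h⁻¹) ?_ ?_ ?_ ?_
    · intro x hx
      simp only [hcl, Finset.mem_filter, Finset.mem_univ, true_and] at hx ⊢
      exact hx.trans (isConj_iff.2 ⟨h, rfl⟩)
    · intro a _ b _ hab
      simpa using hab
    · intro y hy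
      simp only [hcl, Finset.mem_filter, Finset.mem_univ, true_and] at hy
      refine ⟨h⁻¹ * y * h, ?_, by group⟩
      simp only [hcl, Finset.mem_filter, Finset.mem_univ, true_and]
      exact hy.trans (isConj_iff.2 ⟨h⁻¹, by simp⟩)
    · intro x _
      congr 1
      group)
  have : Nonempty (Fin d) := ⟨⟨0, hd⟩⟩
  refine ⟨c, ?_, ?_⟩
  · let f : MonoidAlgebra ℤ G →ₐ[ℤ] Matrix (Fin d) (Fin d) ℂ :=
      MonoidAlgebra.lift ℤ (Matrix (Fin d) (Fin d) ℂ) G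
        ((φ : MonoidAlgebra ℂ G →* Matrix (Fin d) (Fin d) ℂ).comp (MonoidAlgebra.of ℂ G))
    have h1 : f (∑ x ∈ cl, MonoidAlgebra.of ℤ G x) = algebraMap ℂ _ c := by
      rw [← hc]
      simp only [z, map_sum, f, MonoidAlgebra.lift_of]
      rfl
    have h2 : IsIntegral ℤ (∑ x ∈ cl, MonoidAlgebra.of ℤ G x) := IsIntegral.of_finite ℤ _
    have h3 := h2.map f
    rw [h1] at h3
    exact (isIntegral_algebraMap_iff (algebraMap ℂ (Matrix (Fin d) (Fin d) ℂ)).injective).1 h3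
  · rw [← trace_algebraMap_matrix, ← hc]
    simp only [z, map_sum, Matrix.trace_sum]
    rw [Finset.sum_congr rfl (fun x hx => trace_conj_eq φ g x (by simpa [hcl] using hx))]
    simp

lemma sum_trace_nontrivial (hφ : Function.Surjective φ)
    (h : ∃ g, φ (MonoidAlgebra.of ℂ G g) ≠ 1) :
    ∑ g, (φ (MonoidAlgebra.of ℂ G g)).trace = 0 := by
  obtain ⟨g, hg⟩ := h
  let z : MonoidAlgebra ℂ G := ∑ x, MonoidAlgebra.of ℂ G x
  have hl : ∀ h, MonoidAlgebra.of ℂ G h * z = z := by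
    intro h
    simp only [z, Finset.mul_sum, ← map_mul]
    exact Fintype.sum_equiv (Equiv.mulLeft h) _ _ (fun x => rfl)
  have hr : ∀ h, z * MonoidAlgebra.of ℂ G h = z := by
    intro h
    simp only [z, Finset.sum_mul, ← map_mul]
    exact Fintype.sum_equiv (Equiv.mulRight h) _ _ (fun x => rfl)
  obtain ⟨c, hc⟩ := central_scalar φ hφ z (fun h => by rw [hl, hr])
  have h1 : c • (φ (MonoidAlgebra.of ℂ G g) - 1) = 0 := by
    have := congrArg φ (hl g)
    rw [map_mul, hc, Algebra.algebraMap_eq_smul_one, mul_smul_comm, mul_one] at this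
    rw [smul_sub, this, sub_self]
  have hc0 : c = 0 := (smul_eq_zero.1 h1).resolve_right (sub_ne_zero.2 hg)
  rw [← Matrix.trace_sum, ← map_sum]
  change (φ z).trace = 0
  rw [hc, hc0]
  simp

lemma dim_one_of_trivial (hφ : Function.Surjective φ) (hd : 0 < d)
    (h : ∀ g, φ (MonoidAlgebra.of ℂ G g) = 1) : d = 1 := by
  have h1 : ∀ y : MonoidAlgebra ℂ G, ∃ c : ℂ, φ y = algebraMap ℂ _ c := by
    intro y
    induction y using MonoidAlgebra.induction_on with
    | of g => exact ⟨1, by rw [h g, map_one]⟩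
    | add a b ha hb =>
      obtain ⟨x, hx⟩ := ha
      obtain ⟨y, hy⟩ := hb
      exact ⟨x + y, by rw [map_add, map_add, hx, hy]⟩
    | smul r a ha =>
      obtain ⟨x, hx⟩ := ha
      exact ⟨r * x, by rw [map_smul, hx, map_mul, Algebra.smul_def]⟩
  by_contra hne
  have hlt : 1 < d := by omega
  obtain ⟨y, hy⟩ := hφ (Matrix.single ⟨0, hd⟩ ⟨1, hlt⟩ 1)
  obtain ⟨c, hc⟩ := h1 y
  have h2 := congrFun (congrFun (hy.symm.trans hc) ⟨0, hd⟩) ⟨1, hlt⟩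
  simp [Matrix.algebraMap_matrix_apply] at h2

end

section
open Classical

lemma trace_eq_zero_of_nontrivial {G : Type*} [Group G] [Fintype G] [IsSimpleGroup G] {d : ℕ}
    (φ : MonoidAlgebra ℂ G →ₐ[ℂ] Matrix (Fin d) (Fin d) ℂ)
    (hφ : Function.Surjective φ) (hd : 0 < d)
    (hc : Subgroup.center G = ⊥) (g : G) (hg : g ≠ 1) (p k : ℕ) (hp : p.Prime)
    (hcl : (Finset.univ.filter (fun x => IsConj g x)).card = p ^ k)
    (hnt : ¬ ∀ h, φ (MonoidAlgebra.of ℂ G h) = 1) (hpd : ¬ p ∣ d) :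
    (φ (MonoidAlgebra.of ℂ G g)).trace = 0 := by
  let ψ : G →* Matrix (Fin d) (Fin d) ℂ :=
    (φ : MonoidAlgebra ℂ G →* Matrix (Fin d) (Fin d) ℂ).comp (MonoidAlgebra.of ℂ G)
  have hψ : ∀ h, ψ h = φ (MonoidAlgebra.of ℂ G h) := fun _ => rfl
  have hM : (ψ g) ^ (Fintype.card G) = 1 := by
    rw [← map_pow, pow_card_eq_one, map_one]
  have hti := matrix_trace_integral _ d Fintype.card_pos _ hM
  obtain ⟨c, hci, hcd⟩ := class_sum_integral φ hφ hd g
  rw [hcl, ← hψ] at hcd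
  have hcop : IsCoprime ((p ^ k : ℕ) : ℤ) (d : ℤ) :=
    Nat.isCoprime_iff_coprime.2 (((Nat.Prime.coprime_iff_not_dvd hp).2 hpd).pow_left k)
  obtain ⟨a, b, hab⟩ := hcop
  have hd0 : (d : ℂ) ≠ 0 := by exact_mod_cast hd.ne'
  have habC : (a : ℂ) * ((p ^ k : ℕ) : ℂ) + b * d = 1 := by exact_mod_cast hab
  have hint : IsIntegral ℤ ((ψ g).trace / d) := by
    have : (ψ g).trace / d = (a : ℂ) * c + b * (ψ g).trace := by
      rw [div_eq_iff hd0]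
      linear_combination (-(ψ g).trace) * habC - a * hcd
    rw [this]
    exact ((isIntegral_algebraMap (x := a)).mul hci).add
      ((isIntegral_algebraMap (x := b)).mul hti)
  rcases matrix_scalar_or_trace _ d Fintype.card_pos _ hM hint with h | ⟨c, h⟩
  · exact h
  exfalso
  have hker : ψ.ker = ⊥ := by
    rcases (inferInstance : ψ.ker.Normal).eq_bot_or_eq_top with h | h
    · exact h
    · exact absurd (fun x => (MonoidHom.mem_ker (f := ψ)).1 (by rw [h]; trivial)) hnt
  have hinj : Function.Injective ψ := (MonoidHom.ker_eq_bot_iff ψ).1 hker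
  have hgc : g ∈ Subgroup.center G := by
    rw [Subgroup.mem_center_iff]
    intro x
    apply hinj
    rw [map_mul, map_mul, h, Algebra.commutes]
  rw [hc] at hgc
  exact hg (Subgroup.mem_bot.1 hgc)

lemma burnside_class {G : Type*} [Group G] [Fintype G] [IsSimpleGroup G]
    (hc : Subgroup.center G = ⊥) (g : G) (hg : g ≠ 1) (p k : ℕ) (hp : p.Prime)
    (hcl : (Finset.univ.filter (fun x => IsConj g x)).card = p ^ k) : False := by
  obtain ⟨n, d, hd, ⟨e⟩⟩ :=
    IsSemisimpleRing.exists_algEquiv_pi_matrix_of_isAlgClosed ℂ (MonoidAlgebra ℂ G)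
  let φ : ∀ i, MonoidAlgebra ℂ G →ₐ[ℂ] Matrix (Fin (d i)) (Fin (d i)) ℂ := fun i =>
    (Pi.evalAlgHom ℂ (fun i => Matrix (Fin (d i)) (Fin (d i)) ℂ) i).comp e.toAlgHom
  have hφ : ∀ i, Function.Surjective (φ i) := fun i =>
    (Function.surjective_eval i).comp e.surjective
  have hd' : ∀ i, 0 < d i := fun i => Nat.pos_of_ne_zero (hd i).out
  let χ : Fin n → G → ℂ := fun i h => (φ i (MonoidAlgebra.of ℂ G h)).trace
  have hreg : ∀ h : G, ∑ i, (d i : ℂ) * χ i h = if h = 1 then (Fintype.card G : ℂ) else 0 := by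
    intro h
    rw [← trace_mulLeft_group, ← LinearMap.trace_conj' _ e.toLinearEquiv]
    have : e.toLinearEquiv.conj (LinearMap.mulLeft ℂ (MonoidAlgebra.of ℂ G h)) =
        LinearMap.mulLeft ℂ (e (MonoidAlgebra.of ℂ G h)) := by
      apply LinearMap.ext
      intro x
      rw [LinearEquiv.conj_apply_apply, LinearMap.mulLeft_apply, LinearMap.mulLeft_apply]
      change e (_ * e.symm x) = _
      rw [map_mul, AlgEquiv.apply_symm_apply]
    rw [this, trace_mulLeft_pi]
    rfl
  let triv : Fin n → Prop := fun i => ∀ h, φ i (MonoidAlgebra.of ℂ G h) = 1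
  have hcard : (Fintype.card G : ℂ) ≠ 0 := by exact_mod_cast Fintype.card_ne_zero
  have hone : ∑ i, (if triv i then (1 : ℂ) else 0) = 1 := by
    have h1 : ∑ h, ∑ i, (d i : ℂ) * χ i h = Fintype.card G := by
      rw [Finset.sum_congr rfl (fun h _ => hreg h)]
      simp
    rw [Finset.sum_comm] at h1
    have h2 : ∀ i, ∑ h, (d i : ℂ) * χ i h =
        (if triv i then (1 : ℂ) else 0) * Fintype.card G := by
      intro i
      rw [← Finset.mul_sum]
      split_ifs with ht
      · have h3 := dim_one_of_trivial (φ i) (hφ i) (hd' i) ht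
        have h4 : ∀ h, χ i h = 1 := by
          intro h
          simp only [χ, ht h, Matrix.trace_one, Fintype.card_fin, h3, Nat.cast_one]
        rw [Finset.sum_congr rfl (fun h _ => h4 h), h3]
        simp
      · have h3 := sum_trace_nontrivial (φ i) (hφ i) (by simpa [triv] using ht)
        change (d i : ℂ) * ∑ h, (φ i (MonoidAlgebra.of ℂ G h)).trace = _
        rw [h3]
        simp
    rw [Finset.sum_congr rfl (fun i _ => h2 i), ← Finset.sum_mul] at h1
    exact mul_right_cancel₀ hcard (by rw [h1, one_mul])
  have hterm : ∀ i, ∃ t : ℂ, IsIntegral ℤ t ∧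
      (d i : ℂ) * χ i g = (if triv i then (1 : ℂ) else 0) + p * t := by
    intro i
    by_cases ht : triv i
    · have h3 := dim_one_of_trivial (φ i) (hφ i) (hd' i) ht
      refine ⟨0, isIntegral_zero, ?_⟩
      simp only [χ, ht g, Matrix.trace_one, Fintype.card_fin, h3, Nat.cast_one, if_pos ht]
      simp
    · simp only [if_neg ht, zero_add]
      by_cases hpd : p ∣ d i
      · obtain ⟨m, hm⟩ := hpd
        have hM : (φ i (MonoidAlgebra.of ℂ G g)) ^ (Fintype.card G) = 1 := by
          rw [← map_pow, ← map_pow, pow_card_eq_one, map_one, map_one]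
        refine ⟨(m : ℂ) * χ i g, ?_, ?_⟩
        · have h5 : IsIntegral ℤ (m : ℂ) := by
            simpa using (isIntegral_algebraMap (R := ℤ) (A := ℂ) (x := (m : ℤ)))
          exact h5.mul (matrix_trace_integral _ _ Fintype.card_pos _ hM)
        · rw [hm]; push_cast; ring
      · refine ⟨0, isIntegral_zero, ?_⟩
        have := trace_eq_zero_of_nontrivial (φ i) (hφ i) (hd' i) hc g hg p k hp hcl ht hpd
        change (d i : ℂ) * (φ i (MonoidAlgebra.of ℂ G g)).trace = _
        rw [this]; simp
  choose t hti ht using hterm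
  have hsum := hreg g
  rw [Finset.sum_congr rfl (fun i _ => ht i), Finset.sum_add_distrib, hone, ← Finset.mul_sum,
    if_neg hg] at hsum
  have hT : IsIntegral ℤ (∑ i, t i) := IsIntegral.sum _ (fun i _ => hti i)
  have hp0 : (p : ℚ) ≠ 0 := by exact_mod_cast hp.ne_zero
  have hp0' : (p : ℂ) ≠ 0 := by exact_mod_cast hp.ne_zero
  have hTq : ∑ i, t i = algebraMap ℚ ℂ (-1 / p) := by
    simp only [map_div₀, map_neg, map_one, map_natCast]
    rw [eq_div_iff hp0']
    linear_combination hsum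
  rw [hTq, isIntegral_algebraMap_iff (algebraMap ℚ ℂ).injective] at hT
  obtain ⟨m, hm⟩ := IsIntegrallyClosed.isIntegral_iff.1 hT
  have h6 : (m : ℚ) * p = -1 := by
    have : (m : ℚ) = -1 / p := by simpa using hm
    rw [this, div_mul_cancel₀ _ hp0]
  have h7 : m * (p : ℤ) = -1 := by exact_mod_cast h6
  have h8 : (p : ℤ) ∣ 1 := ⟨-m, by linarith⟩
  have h9 : p ∣ 1 := by exact_mod_cast h8
  exact hp.one_lt.ne' (Nat.dvd_one.1 h9)

lemma burnside_simple {G : Type*} [Group G] [Finite G] [IsSimpleGroup G]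
    (h2 : (Nat.card G).primeFactors.card ≤ 2) : Group.IsSolvable G := by
  have := Fintype.ofFinite G
  rcases (inferInstance : (Subgroup.center G).Normal).eq_bot_or_eq_top with hc | hc
  swap
  · exact Group.isSolvable_of_comm (fun a b =>
      (Subgroup.mem_center_iff.1 (by rw [hc]; trivial : b ∈ Subgroup.center G) a))
  exfalso
  have hG1 : 1 < Nat.card G := Finite.one_lt_card
  obtain ⟨p, hp, hpG⟩ := Nat.exists_prime_and_dvd hG1.ne'
  have := Fact.mk hp
  let P : Sylow p G := default
  have hPnt : Nontrivial P := by
    have : (P : Subgroup G) ≠ ⊥ := P.ne_bot_of_dvd_card hpG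
    exact (Subgroup.nontrivial_iff_ne_bot _).2 this
  have hcn : Nontrivial (Subgroup.center P) := P.isPGroup'.center_nontrivial
  obtain ⟨⟨g, hgc⟩, hg1⟩ := exists_ne (1 : Subgroup.center P)
  have hg : (g : G) ≠ 1 := by
    intro h
    apply hg1
    ext
    simpa using h
  -- the class size
  have hle : (P : Subgroup G) ≤ Subgroup.centralizer {(g : G)} := by
    intro x hx
    rw [Subgroup.mem_centralizer_singleton_iff]
    have := Subgroup.mem_center_iff.1 hgc ⟨x, hx⟩
    simpa using congrArg (Subtype.val) this
  have hclass : (Finset.univ.filter (fun x => IsConj (g : G) x)).card =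
      (Subgroup.centralizer {(g : G)}).index := by
    rw [← Nat.mul_right_inj (Nat.card_pos (α := Subgroup.centralizer {(g : G)})).ne',
      Subgroup.card_mul_index, Subgroup.nat_card_centralizer_nat_card_stabilizer]
    have h3 := Nat.card_congr (MulAction.orbitProdStabilizerEquivGroup (ConjAct G) (g : G))
    rw [Nat.card_prod] at h3
    have h4 : Nat.card (MulAction.orbit (ConjAct G) (g : G)) =
        (Finset.univ.filter (fun x => IsConj (g : G) x)).card := by
      rw [ConjAct.orbit_eq_carrier_conjClasses, Nat.card_eq_fintype_card, Fintype.card_subtype]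
      congr 1
      ext x
      simp only [Finset.mem_filter, Finset.mem_univ, true_and]
      rw [ConjClasses.mem_carrier_iff_mk_eq, ConjClasses.mk_eq_mk_iff_isConj, isConj_comm]
    rw [← h4, mul_comm, h3]
    rfl
  have hdvd : (Subgroup.centralizer {(g : G)}).index ∣ Nat.card G := Subgroup.index_dvd_card _
  have hnp : ¬ p ∣ (Subgroup.centralizer {(g : G)}).index := fun h =>
    P.not_dvd_index (h.trans (Subgroup.index_dvd_of_le hle))
  set m := (Subgroup.centralizer {(g : G)}).index with hm
  have hm0 : m ≠ 0 := Subgroup.index_ne_zero_of_finite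
  have hsub : m.primeFactors ⊆ (Nat.card G).primeFactors.erase p := by
    intro q hq
    rw [Finset.mem_erase]
    refine ⟨?_, Nat.primeFactors_mono hdvd hG1.ne_bot hq⟩
    rintro rfl
    exact hnp (Nat.dvd_of_mem_primeFactors hq)
  have hcard1 : m.primeFactors.card ≤ 1 := by
    have h5 := Finset.card_le_card hsub
    rw [Finset.card_erase_of_mem (Nat.mem_primeFactors.2 ⟨hp, hpG, hG1.ne_bot⟩)] at h5
    omega
  have hpow : ∃ q k : ℕ, q.Prime ∧ m = q ^ k := by
    rcases Nat.eq_zero_or_pos m.primeFactors.card with h0 | h0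
    · have := Nat.primeFactors_eq_empty.1 (Finset.card_eq_zero.1 h0)
      exact ⟨2, 0, Nat.prime_two, by rw [pow_zero]; exact this.resolve_left hm0⟩
    · obtain ⟨q, hq⟩ := Finset.card_eq_one.1 (le_antisymm hcard1 h0)
      have hqm : q ∈ m.primeFactors := by rw [hq]; simp
      refine ⟨q, m.factorization q, Nat.prime_of_mem_primeFactors hqm, ?_⟩
      conv_lhs => rw [← Nat.prod_factorization_pow_eq_self hm0]
      rw [Finsupp.prod, Nat.support_factorization, hq, Finset.prod_singleton]
  obtain ⟨q, k, hq, hmq⟩ := hpow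
  exact burnside_class hc (g : G) hg q k hq (by rw [hclass, hmq])

lemma burnside_solvable (n : ℕ) : ∀ (G : Type*) [Group G] [Finite G], Nat.card G = n →
    (Nat.card G).primeFactors.card ≤ 2 → Group.IsSolvable G := by
  induction n using Nat.strong_induction_on with
  | _ n ih =>
    intro G _ _ hn h2
    rcases subsingleton_or_nontrivial G with hs | hs
    · infer_instance
    by_cases hsimp : ∀ H : Subgroup G, H.Normal → H = ⊥ ∨ H = ⊤
    · have : IsSimpleGroup G := { eq_bot_or_eq_top_of_normal := hsimp }
      exact burnside_simple h2
    push Not at hsimp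
    obtain ⟨H, hH, hbot, htop⟩ := hsimp
    have hmul := H.card_eq_card_quotient_mul_card_subgroup
    have hc0 : Nat.card G ≠ 0 := Nat.card_pos.ne'
    have hH1 : 1 < Nat.card H := (Subgroup.one_lt_card_iff_ne_bot H).2 hbot
    have hQ1 : 1 < Nat.card (G ⧸ H) := by
      have : H.index ≠ 1 := fun h => htop (Subgroup.index_eq_one.1 h)
      have h0 : H.index ≠ 0 := Subgroup.index_ne_zero_of_finite
      change 1 < H.index
      omega
    have key : ∀ m, m ∣ Nat.card G → m.primeFactors.card ≤ 2 := fun m hm =>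
      (Finset.card_le_card (Nat.primeFactors_mono hm hc0)).trans h2
    have s1 : Group.IsSolvable H := ih _ (by rw [← hn, hmul]; nlinarith) H rfl
      (key _ (Subgroup.card_subgroup_dvd_card H))
    have s2 : Group.IsSolvable (G ⧸ H) := ih _ (by rw [← hn, hmul]; nlinarith) (G ⧸ H) rfl
      (key _ (Subgroup.card_quotient_dvd_card H))
    exact Group.isSolvable_of_ker_le_range H.subtype (QuotientGroup.mk' H) (by simp)

end


/-- Every finite insoluble group has order divisible by at least three distinct
primes. -/
theorem insoluble_three_prime_divisors (G : Type*) [Group G] [Finite G]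
    (h : ¬ IsSolvable G) : 3 ≤ (Nat.card G).primeFactors.card := by
  by_contra hlt
  exact h (burnside_solvable _ G rfl (by omega))
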